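/- Every strict 3-player game in which each player has exactly 2 strategies and which possesses a pure Nash equilibrium is weakly acyclic under best response. -/

import Mathlib

section Defs

variable {n : ℕ} {S : Fin n → Type*}

/-- A better-response transition: `s'` differs from `s` only in player `i`'s
strategy, which strictly improves `i`'s utility. -/
def IsBetter (u : ∀ i : Fin n, (∀ j, S j) → ℝ) (s s' : ∀ j, S j) : Prop :=
  ∃ i, s' = Function.update s i (s' i) ∧ s' i ≠ s i ∧ u i s < u i s'

/-- A best-response transition: additionally the new strategy maximizes
`i`'s utility against the others' strategies. -/
def IsBest (u : ∀ i : Fin n, (∀ j, S j) → ℝ) (s s' : ∀ j, S j) : Prop :=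
  ∃ i, s' = Function.update s i (s' i) ∧ s' i ≠ s i ∧ u i s < u i s' ∧
    ∀ t : S i, u i (Function.update s i t) ≤ u i s'

/-- Pure Nash equilibrium. -/
def IsNash (u : ∀ i : Fin n, (∀ j, S j) → ℝ) (s : ∀ j, S j) : Prop :=
  ∀ i, ∀ t : S i, u i (Function.update s i t) ≤ u i s

/-- Weak acyclicity (under better response). -/
def WeaklyAcyclic (u : ∀ i : Fin n, (∀ j, S j) → ℝ) : Prop :=
  ∀ s, ∃ e, Relation.ReflTransGen (IsBetter u) s e ∧ IsNash u e

/-- Weak acyclicity under best response. -/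
def WeaklyAcyclicBest (u : ∀ i : Fin n, (∀ j, S j) → ℝ) : Prop :=
  ∀ s, ∃ e, Relation.ReflTransGen (IsBest u) s e ∧ IsNash u e

/-- Membership of a profile in the subgame given by strategy sets `T`. -/
def InSub (T : ∀ i, Set (S i)) (s : ∀ j, S j) : Prop := ∀ i, s i ∈ T i

/-- Pure Nash equilibrium of the subgame given by `T`. -/
def IsNashOn (u : ∀ i : Fin n, (∀ j, S j) → ℝ) (T : ∀ i, Set (S i)) (s : ∀ j, S j) : Prop :=
  InSub T s ∧ ∀ i, ∀ t ∈ T i, u i (Function.update s i t) ≤ u i s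

/-- Best-response transition within the subgame given by `T`. -/
def IsBestOn (u : ∀ i : Fin n, (∀ j, S j) → ℝ) (T : ∀ i, Set (S i)) (s s' : ∀ j, S j) : Prop :=
  InSub T s ∧ InSub T s' ∧ ∃ i, s' = Function.update s i (s' i) ∧ s' i ≠ s i ∧
    u i s < u i s' ∧ ∀ t ∈ T i, u i (Function.update s i t) ≤ u i s'

/-- Subgame stability: every subgame has a pure Nash equilibrium. -/
def SubgameStable (u : ∀ i : Fin n, (∀ j, S j) → ℝ) : Prop :=
  ∀ T : ∀ i, Set (S i), (∀ i, (T i).Nonempty) → ∃ s, IsNashOn u T s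

/-- Unique subgame stability: every subgame has exactly one pure Nash equilibrium. -/
def USS (u : ∀ i : Fin n, (∀ j, S j) → ℝ) : Prop :=
  ∀ T : ∀ i, Set (S i), (∀ i, (T i).Nonempty) → ∃! s, IsNashOn u T s

/-- Strict game: no player is indifferent between two of its own strategies
against a fixed profile of the others. -/
def StrictGame (u : ∀ i : Fin n, (∀ j, S j) → ℝ) : Prop :=
  ∀ i (s : ∀ j, S j) (t : S i), t ≠ s i → u i (Function.update s i t) ≠ u i s

/-- Reachability by best-response improvement paths. -/
def BRReach (u : ∀ i : Fin n, (∀ j, S j) → ℝ) (s t : ∀ j, S j) : Prop :=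
  Relation.ReflTransGen (IsBest u) s t

/-- The (strategy sets of the) subgame spanned by `BR_Γ(s)`. -/
def SpanBR (u : ∀ i : Fin n, (∀ j, S j) → ℝ) (s : ∀ j, S j) : ∀ i, Set (S i) :=
  fun i => {x | ∃ t, BRReach u s t ∧ t i = x}

/-- A sink of the best-response dynamics: a nonempty set of profiles closed
under best-response transitions and strongly connected. -/
def IsSinkBest (u : ∀ i : Fin n, (∀ j, S j) → ℝ) (X : Set (∀ j, S j)) : Prop :=
  X.Nonempty ∧ (∀ s ∈ X, ∀ s', IsBest u s s' → s' ∈ X) ∧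
    ∀ s ∈ X, ∀ s' ∈ X, Relation.ReflTransGen (IsBest u) s s'

end Defs

theorem cube_aux (P I J K : Bool → Bool → Bool → Prop)
    (hI : ∀ a b c, I a b c ↔ ¬ I (!a) b c)
    (hJ : ∀ a b c, J a b c ↔ ¬ J a (!b) c)
    (hK : ∀ a b c, K a b c ↔ ¬ K a b (!c))
    (hN : ∀ a b c, ¬ I a b c → ¬ J a b c → ¬ K a b c → P a b c)
    (sI : ∀ a b c, I a b c → P (!a) b c → P a b c)
    (sJ : ∀ a b c, J a b c → P a (!b) c → P a b c)
    (sK : ∀ a b c, K a b c → P a b (!c) → P a b c)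
    (eI : ¬ I false false false) (eJ : ¬ J false false false) (eK : ¬ K false false false) :
    ∀ a b c, P a b c := by
  have h0 : P false false false := hN _ _ _ eI eJ eK
  have h1 : P true false false := sI _ _ _ (by simpa using (hI true false false).2 eI) h0
  have h2 : P false true false := sJ _ _ _ (by simpa using (hJ false true false).2 eJ) h0
  have h3 : P false false true := sK _ _ _ (by simpa using (hK false false true).2 eK) h0
  have k1 : ¬ I false true true → P false true true := fun hn => by
    by_cases a : J false true true
    · exact sJ _ _ _ a h3
    by_cases b : K false true true
    · exact sK _ _ _ b h2
    exact hN _ _ _ hn a b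
  have k2 : ¬ J true false true → P true false true := fun hn => by
    by_cases a : I true false true
    · exact sI _ _ _ a h3
    by_cases b : K true false true
    · exact sK _ _ _ b h1
    exact hN _ _ _ a hn b
  have k3 : ¬ K true true false → P true true false := fun hn => by
    by_cases a : I true true false
    · exact sI _ _ _ a h2
    by_cases b : J true true false
    · exact sJ _ _ _ b h1
    exact hN _ _ _ a b hn
  have h7 : P true true true := by
    by_cases a : I true true true
    · exact sI _ _ _ a (k1 ((hI _ _ _).1 a))
    by_cases b : J true true true
    · exact sJ _ _ _ b (k2 ((hJ _ _ _).1 b))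
    by_cases c : K true true true
    · exact sK _ _ _ c (k3 ((hK _ _ _).1 c))
    exact hN _ _ _ a b c
  have m1 : P false true true := by
    by_cases a : I false true true
    · exact sI _ _ _ a h7
    · exact k1 a
  have m2 : P true false true := by
    by_cases a : J true false true
    · exact sJ _ _ _ a h7
    · exact k2 a
  have m3 : P true true false := by
    by_cases a : K true true false
    · exact sK _ _ _ a h7
    · exact k3 a
  intro a b c
  cases a <;> cases b <;> cases c <;> assumption

theorem stmt8 {S : Fin 3 → Type*} [∀ i, Fintype (S i)] [∀ i, Nonempty (S i)]
    (u : ∀ i : Fin 3, (∀ j, S j) → ℝ) (hcard : ∀ i, Fintype.card (S i) = 2)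
    (hstrict : StrictGame u) (hne : ∃ s, IsNash u s) : WeaklyAcyclicBest u := by
  classical
  obtain ⟨e, he⟩ := hne
  have hf : ∀ i, ∃ y : S i, y ≠ e i ∧ ∀ x, x = e i ∨ x = y := by
    intro i
    obtain ⟨x, y, hxy, hu'⟩ := Nat.card_eq_two_iff.1 (Nat.card_eq_fintype_card.trans (hcard i))
    have hu : ∀ z, z = x ∨ z = y := fun z => by
      have hz : z ∈ ({x, y} : Set (S i)) := by rw [hu']; trivial
      simpa using hz
    rcases hu (e i) with h | h
    · exact ⟨y, by rw [h]; exact hxy.symm, fun z => by rw [h]; exact hu z⟩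
    · exact ⟨x, by rw [h]; exact hxy, fun z => by rw [h]; exact (hu z).symm⟩
  choose f hfe hfu using hf
  let g : ∀ i, Bool → S i := fun i b => if b then f i else e i
  have hgs : ∀ i x, ∃ b, g i b = x := by
    intro i x
    rcases hfu i x with h | h
    · exact ⟨false, by simp [g, h]⟩
    · exact ⟨true, by simp [g, h]⟩
  have hgn : ∀ i b, g i (!b) ≠ g i b := by
    intro i b
    cases b
    · simpa [g] using hfe i
    · simpa [g] using (hfe i).symm
  let φ : (Fin 3 → Bool) → ∀ j, S j := fun v j => g j (v j)
  have hupd : ∀ v i b, φ (Function.update v i b) = Function.update (φ v) i (g i b) := by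
    intro v i b
    funext j
    by_cases h : j = i
    · subst h; simp [φ]
    · simp [φ, h]
  let fl : (Fin 3 → Bool) → Fin 3 → (Fin 3 → Bool) := fun v i => Function.update v i (!(v i))
  let I : Fin 3 → (Fin 3 → Bool) → Prop := fun i v => u i (φ v) < u i (φ (fl v i))
  let P : (Fin 3 → Bool) → Prop := fun v => 
    ∃ e, Relation.ReflTransGen (IsBest u) (φ v) e ∧ IsNash u e
  have hself : ∀ v i, Function.update (φ v) i (g i (v i)) = φ v := by
    intro v i; rw [← hupd]; simp
  have hflfl : ∀ v i, fl (fl v i) i = v := by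
    intro v i; simp [fl]
  have hI : ∀ i v, I i v ↔ ¬ I i (fl v i) := by
    intro i v
    have hs : u i (φ (fl v i)) ≠ u i (φ v) := by
      simp only [fl, hupd]
      exact hstrict i (φ v) _ (hgn i (v i))
    simp only [I, hflfl, not_lt]
    exact ⟨le_of_lt, fun h => lt_of_le_of_ne h hs.symm⟩
  have hmax : ∀ i v t, Function.update (φ v) i t = φ v ∨
      Function.update (φ v) i t = φ (fl v i) := by
    intro i v t
    obtain ⟨b, rfl⟩ := hgs i t
    by_cases h : b = v i
    · left; rw [h, hself]
    · right
      have : b = !(v i) := by cases b <;> cases hv : v i <;> simp_all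
      simp only [fl, hupd, this]
  have hN : ∀ v, (∀ i, ¬ I i v) → P v := by
    intro v h
    refine ⟨φ v, .refl, fun i t => ?_⟩
    rcases hmax i v t with h' | h' <;> rw [h']
    exact not_lt.1 (h i)
  have hS : ∀ i v, I i v → P (fl v i) → P v := by
    rintro i v h ⟨e', h1, h2⟩
    refine ⟨e', .head ⟨i, ?_, ?_, h, ?_⟩ h1, h2⟩
    · simp only [fl, hupd]; simp
    · simp only [fl, hupd]; simpa using hgn i (v i)
    · intro t
      rcases hmax i v t with h' | h' <;> rw [h']
      exact h.le
  have he0 : φ (fun _ => false) = e := by funext j; simp [φ, g]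
  have hE : ∀ i, ¬ I i (fun _ => false) := by
    intro i
    simp only [I, not_lt, fl, hupd, he0]
    exact he i _
  have f0 : ∀ a b c, fl ![a, b, c] 0 = ![!a, b, c] := by
    intro a b c; funext j; fin_cases j <;> simp [fl]
  have f1 : ∀ a b c, fl ![a, b, c] 1 = ![a, !b, c] := by
    intro a b c; funext j; fin_cases j <;> simp [fl]
  have f2 : ∀ a b c, fl ![a, b, c] 2 = ![a, b, !c] := by
    intro a b c; funext j; fin_cases j <;> simp [fl]
  have z : ![false, false, false] = (fun _ : Fin 3 => false) := by
    funext j; fin_cases j <;> rfl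
  have key := cube_aux (fun a b c => P ![a, b, c]) (fun a b c => I 0 ![a, b, c])
    (fun a b c => I 1 ![a, b, c]) (fun a b c => I 2 ![a, b, c])
    (fun a b c => by rw [← f0]; exact hI _ _)
    (fun a b c => by rw [← f1]; exact hI _ _)
    (fun a b c => by rw [← f2]; exact hI _ _)
    (fun a b c h0 h1 h2 => hN _ (by intro i; fin_cases i <;> assumption))
    (fun a b c h => by rw [← f0]; exact hS _ _ h)
    (fun a b c h => by rw [← f1]; exact hS _ _ h)
    (fun a b c h => by rw [← f2]; exact hS _ _ h)
    (by rw [z]; exact hE 0) (by rw [z]; exact hE 1) (by rw [z]; exact hE 2)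
  intro s
  choose b hb using fun i => hgs i (s i)
  have hs : φ ![b 0, b 1, b 2] = s := by
    funext j; fin_cases j
    · exact hb 0
    · exact hb 1
    · exact hb 2
  have := key (b 0) (b 1) (b 2)
  simp only [P, hs] at this
  exact this
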